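/- For all integers m, n ≥ 1 with (m,n) ≠ (2,1), χ_la(P_{2m} ∨ K_{2n−1}) = 2n + 1; in the exceptional case, χ_la(P_4 ∨ K_1) = 4. -/

import Mathlib

open Finset SimpleGraph
open scoped Classical

/-- The induced vertex label (weight) of `x`: the sum of `f` over all edges incident to `x`. -/
noncomputable def vertexWeight {V : Type*} [Fintype V] (G : SimpleGraph V)
    (f : Sym2 V → ℕ) (x : V) : ℕ :=
  ∑ e ∈ G.edgeFinset.filter (fun e => x ∈ e), f e

/-- `f` is a local antimagic labeling of `G`: it restricts to a bijection from the edge set of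
`G` onto `{1, …, q}` (where `q` is the number of edges), and adjacent vertices get distinct
induced vertex labels. -/
def IsLocalAntimagic {V : Type*} [Fintype V] (G : SimpleGraph V) (f : Sym2 V → ℕ) : Prop :=
  Set.BijOn f G.edgeSet (Set.Icc 1 G.edgeSet.ncard) ∧
  ∀ ⦃x y : V⦄, G.Adj x y → vertexWeight G f x ≠ vertexWeight G f y

/-- The number of distinct induced vertex labels, `c(f)`. -/
noncomputable def colorCount {V : Type*} [Fintype V] (G : SimpleGraph V)
    (f : Sym2 V → ℕ) : ℕ :=
  (Finset.univ.image (vertexWeight G f)).card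

/-- The local antimagic chromatic number `χ_la(G)`. -/
noncomputable def chiLA {V : Type*} [Fintype V] (G : SimpleGraph V) : ℕ :=
  sInf { n | ∃ f : Sym2 V → ℕ, IsLocalAntimagic G f ∧ colorCount G f = n }

/-- The join `G ∨ H` of two vertex-disjoint graphs. -/
def joinG {α β : Type*} (G : SimpleGraph α) (H : SimpleGraph β) : SimpleGraph (α ⊕ β) :=
  SimpleGraph.fromRel (fun x y =>
    (∃ a b, x = Sum.inl a ∧ y = Sum.inl b ∧ G.Adj a b) ∨
    (∃ a b, x = Sum.inr a ∧ y = Sum.inr b ∧ H.Adj a b) ∨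
    (∃ a b, x = Sum.inl a ∧ y = Sum.inr b))

/-!
Label `G` and its spokes to `k` further vertices by the small labels and the edges of `K_k` by the
large ones, in colexicographic order. Then the weights of the `k` vertices are distinct, and larger
than all weights on `G`, as soon as the sums of the spoke labels at these vertices increase and are
not too small. So `G ∨ K_k` needs only `k` colors more than there are weights on `G`, and a clique
gives the matching lower bound. Two more vertices can always be added: label their spokes by the
next labels, in increasing order at the first vertex and in decreasing order at the second, so that
all weights on `G` grow by the same amount.

It remains to make the weights on the path alternate between two values, which explicit labelings
achieve for `P_{2m} ∨ K_1` with `m ≠ 2` and for `P_4 ∨ K_3`. In `P_4 ∨ K_1`, two path vertices at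
distance two are adjacent to both ends of a common edge, so with three colors they have equal
weights; a finite search excludes this.
-/

section General

variable {V : Type*} [Fintype V] {G : SimpleGraph V} {f : Sym2 V → ℕ}

lemma vertexWeight_eq_sum (G : SimpleGraph V) (f : Sym2 V → ℕ) (x : V) :
    vertexWeight G f x = ∑ y with G.Adj x y, f s(x, y) := by
  have hedges : G.edgeFinset.filter (x ∈ ·) = ({y | G.Adj x y} : Finset V).image (s(x, ·)) := by
    ext z
    simp only [mem_filter, mem_edgeFinset, mem_image, mem_univ, true_and]
    constructor
    · rintro ⟨hz, y, rfl⟩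
      exact ⟨y, hz, rfl⟩
    · rintro ⟨y, hy, rfl⟩
      exact ⟨hy, Sym2.mem_mk_left x y⟩
  rw [vertexWeight, hedges, sum_image fun _ _ _ _ h => Sym2.congr_right.1 h]

lemma IsLocalAntimagic.colorable (hf : IsLocalAntimagic G f) : G.Colorable (colorCount G f) := by
  let c : G.Coloring (univ.image (vertexWeight G f)) :=
    Coloring.mk (fun x => ⟨vertexWeight G f x, mem_image_of_mem _ (mem_univ x)⟩)
      fun h => Subtype.coe_ne_coe.1 (hf.2 h)
  simpa only [Fintype.card_coe, colorCount] using c.colorable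

lemma IsLocalAntimagic.vertexWeight_eq_of_diamond (hf : IsLocalAntimagic G f)
    (hcolors : colorCount G f ≤ 3) {a b u v : V} (huv : G.Adj u v) (hau : G.Adj a u)
    (hav : G.Adj a v) (hbu : G.Adj b u) (hbv : G.Adj b v) :
    vertexWeight G f a = vertexWeight G f b := by
  by_contra hab
  set w := vertexWeight G f
  have hfour : #{w a, w b, w u, w v} = 4 := by
    have hwau : w a ≠ w u := hf.2 hau
    have hwav : w a ≠ w v := hf.2 hav
    have hwbu : w b ≠ w u := hf.2 hbu
    have hwbv : w b ≠ w v := hf.2 hbv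
    have hwuv : w u ≠ w v := hf.2 huv
    simp [card_insert_of_notMem, *]
  have hsub : {w a, w b, w u, w v} ⊆ univ.image w := by
    simp [insert_subset_iff]
  have hle : 4 ≤ 3 := hfour ▸ (card_le_card hsub).trans hcolors
  omega

lemma chiLA_eq {c : ℕ} (hf : IsLocalAntimagic G f) (hfc : colorCount G f ≤ c)
    (hc : ∀ g, IsLocalAntimagic G g → c ≤ colorCount G g) : chiLA G = c := by
  refine IsLeast.csInf_eq ⟨⟨f, hf, hfc.antisymm (hc f hf)⟩, ?_⟩
  rintro _ ⟨g, hg, rfl⟩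
  exact hc g hg

lemma bijOn_Icc_of_injOn {ι : Type*} {f : ι → ℕ} {s : Set ι} {q : ℕ}
    (hmaps : Set.MapsTo f s (Set.Icc 1 q)) (hinj : Set.InjOn f s) (hq : s.ncard = q) :
    Set.BijOn f s (Set.Icc 1 q) := by
  refine ⟨hmaps, hinj, (Set.eq_of_subset_of_ncard_le hmaps.image_subset ?_).ge⟩
  rw [hinj.ncard_image, hq, ← coe_Icc, Set.ncard_coe_finset, Nat.card_Icc, Nat.add_sub_cancel]

end General

section Join

variable {α β : Type*} {G : SimpleGraph α} {H : SimpleGraph β}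

@[simp]
lemma joinG_adj_inl_inl {a b : α} : (joinG G H).Adj (.inl a) (.inl b) ↔ G.Adj a b := by
  simpa [joinG, G.adj_comm b a] using fun h : G.Adj a b => h.ne

@[simp]
lemma joinG_adj_inr_inr {c d : β} : (joinG G H).Adj (.inr c) (.inr d) ↔ H.Adj c d := by
  simpa [joinG, H.adj_comm d c] using fun h : H.Adj c d => h.ne

@[simp]
lemma joinG_adj_inl_inr (a : α) (c : β) : (joinG G H).Adj (.inl a) (.inr c) := by
  simp [joinG]

@[simp]
lemma joinG_adj_inr_inl (a : α) (c : β) : (joinG G H).Adj (.inr c) (.inl a) :=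
  (joinG_adj_inl_inr a c).symm

lemma isClique_joinG_disjSum {s : Finset α} {t : Finset β} (hs : G.IsClique s) (ht : H.IsClique t) :
    (joinG G H).IsClique (s.disjSum t : Finset (α ⊕ β)) := by
  rintro (a | c) hx (b | d) hy hne
  · exact joinG_adj_inl_inl.2 (hs (by simpa using hx) (by simpa using hy) (by simpa using hne))
  · exact joinG_adj_inl_inr a d
  · exact joinG_adj_inr_inl b c
  · exact joinG_adj_inr_inr.2 (ht (by simpa using hx) (by simpa using hy) (by simpa using hne))

variable (G H) in
/-- The enumeration of the edges of `G ∨ H`: the edges of `G`, the edges between the two sides,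
and the edges of `H`. -/
def joinEdge : (G.edgeSet ⊕ α × β) ⊕ H.edgeSet → Sym2 (α ⊕ β) :=
  Sum.elim (Sum.elim (fun z => z.1.map .inl) fun p => s(.inl p.1, .inr p.2)) fun z => z.1.map .inr

lemma joinEdge_injective : Function.Injective (joinEdge G H) := by
  refine Function.Injective.sumElim (Function.Injective.sumElim
    ((Sym2.map.injective Sum.inl_injective).comp Subtype.val_injective) ?_ ?_)
    ((Sym2.map.injective Sum.inr_injective).comp Subtype.val_injective) ?_
  · rintro ⟨a, c⟩ ⟨b, d⟩ h
    simpa using h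
  · rintro ⟨⟨a, b⟩, _⟩ ⟨c, d⟩
    simp
  · rintro (⟨⟨a, b⟩, _⟩ | ⟨a, c⟩) ⟨⟨d, d'⟩, _⟩ <;> simp

lemma range_joinEdge : Set.range (joinEdge G H) = (joinG G H).edgeSet := by
  ext z
  constructor
  · rintro ⟨(⟨⟨a, b⟩, h⟩ | ⟨a, c⟩) | ⟨⟨c, d⟩, h⟩, rfl⟩
    · exact joinG_adj_inl_inl.2 h
    · exact joinG_adj_inl_inr a c
    · exact joinG_adj_inr_inr.2 h
  · induction z with | _ x y
    rcases x with a | c <;> rcases y with b | d <;> intro h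
    · exact ⟨.inl (.inl ⟨s(a, b), joinG_adj_inl_inl.1 h⟩), rfl⟩
    · exact ⟨.inl (.inr (a, d)), rfl⟩
    · exact ⟨.inl (.inr (b, c)), Sym2.eq_swap⟩
    · exact ⟨.inr ⟨s(c, d), joinG_adj_inr_inr.1 h⟩, rfl⟩

variable [Fintype α] [Fintype β]

lemma ncard_edgeSet_joinG : (joinG G H).edgeSet.ncard =
    G.edgeSet.ncard + Fintype.card α * Fintype.card β + H.edgeSet.ncard := by
  rw [← range_joinEdge, Set.ncard_range_of_injective joinEdge_injective]
  rw [Nat.card_sum, Nat.card_sum, Nat.card_prod, Nat.card_coe_set_eq, Nat.card_coe_set_eq,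
    Nat.card_eq_fintype_card, Nat.card_eq_fintype_card]

lemma vertexWeight_joinG_inl (f : Sym2 (α ⊕ β) → ℕ) (a : α) :
    vertexWeight (joinG G H) f (.inl a) =
      vertexWeight G (fun z => f (z.map .inl)) a + ∑ c, f s(.inl a, .inr c) := by
  simp only [vertexWeight_eq_sum, sum_filter, Fintype.sum_sum_type, joinG_adj_inl_inl,
    joinG_adj_inl_inr, if_true, Sym2.map_mk]

lemma vertexWeight_joinG_inr (f : Sym2 (α ⊕ β) → ℕ) (c : β) :
    vertexWeight (joinG G H) f (.inr c) =
      ∑ a, f s(.inl a, .inr c) + vertexWeight H (fun z => f (z.map .inr)) c := by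
  simp only [vertexWeight_eq_sum, sum_filter, Fintype.sum_sum_type, joinG_adj_inr_inr,
    joinG_adj_inr_inl, if_true, Sym2.map_mk, Sym2.eq_swap (a := Sum.inr c)]

/-- The labeling of the join of a graph on `α` and a graph on `β` whose labels inside `α` are `e`,
whose labels between the two sides are `M`, and whose labels inside `β` are `κ`. -/
def joinLabel (e : Sym2 α → ℕ) (M : α → β → ℕ) (κ : Sym2 β → ℕ) : Sym2 (α ⊕ β) → ℕ :=
  Sym2.lift ⟨fun
    | .inl a, .inl b => e s(a, b)
    | .inl a, .inr c => M a c
    | .inr c, .inl a => M a c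
    | .inr c, .inr d => κ s(c, d), by
    rintro (a | c) (b | d) <;> simp [Sym2.eq_swap]⟩

end Join

section Colex

variable {k : ℕ}

/-- The label of an edge of `K_k`: its rank, counted from `D + 1`, in the colexicographic order on
pairs. -/
def colexLabel (D : ℕ) (z : Sym2 (Fin k)) : ℕ := D + 1 + (z.sup : ℕ).choose 2 + z.inf

lemma lt_colexLabel (D : ℕ) (z : Sym2 (Fin k)) : D < colexLabel D z := by
  unfold colexLabel
  omega

lemma inf_lt_sup_of_mem_edgeSet {α : Type*} [LinearOrder α] {G : SimpleGraph α} {z : Sym2 α}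
    (hz : z ∈ G.edgeSet) : z.inf < z.sup := by
  induction z with | _ x y
  exact inf_lt_sup.2 (G.ne_of_adj hz)

lemma choose_two_add_lt {i j n : ℕ} (hij : i < j) (hjn : j < n) : j.choose 2 + i < n.choose 2 :=
  calc j.choose 2 + i < j.choose 2 + j := by omega
    _ = (j + 1).choose 2 := by rw [Nat.choose_succ_succ', Nat.choose_one_right, add_comm]
    _ ≤ n.choose 2 := Nat.choose_le_choose 2 hjn

lemma colexLabel_le (D : ℕ) {z : Sym2 (Fin k)} (hz : z ∈ (⊤ : SimpleGraph (Fin k)).edgeSet) :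
    colexLabel D z ≤ D + k.choose 2 := by
  have hlt : (z.inf : ℕ) < z.sup := inf_lt_sup_of_mem_edgeSet hz
  have := choose_two_add_lt hlt z.sup.isLt
  unfold colexLabel
  omega

lemma injOn_colexLabel (D : ℕ) :
    Set.InjOn (colexLabel D) (⊤ : SimpleGraph (Fin k)).edgeSet := by
  intro z hz w hw h
  have hz' : (z.inf : ℕ) < z.sup := inf_lt_sup_of_mem_edgeSet hz
  have hw' : (w.inf : ℕ) < w.sup := inf_lt_sup_of_mem_edgeSet hw
  unfold colexLabel at h
  have hsup : (z.sup : ℕ) = w.sup := by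
    rcases lt_trichotomy (z.sup : ℕ) w.sup with hlt | heq | hlt
    · have := choose_two_add_lt hz' hlt
      omega
    · exact heq
    · have := choose_two_add_lt hw' hlt
      omega
  rw [hsup] at h
  exact Sym2.inf_eq_inf_and_sup_eq_sup.1 ⟨Fin.ext (by omega), Fin.ext hsup⟩

lemma vertexWeight_top {V : Type*} [Fintype V] [DecidableEq V] (f : Sym2 V → ℕ) (x : V) :
    vertexWeight ⊤ f x = ∑ y ∈ univ.erase x, f s(x, y) := by
  rw [vertexWeight_eq_sum]
  exact sum_congr (by ext y; simp [ne_comm]) fun _ _ => rfl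

lemma monotone_vertexWeight_top_colexLabel (D : ℕ) :
    Monotone (vertexWeight (⊤ : SimpleGraph (Fin k)) (colexLabel D)) := by
  intro a b hab
  rcases hab.eq_or_lt with rfl | hlt
  · rfl
  have hlabel : ∀ d, colexLabel D s(a, d) ≤ colexLabel D s(b, d) := fun d => by
    have hsup : Nat.choose (a ⊔ d : Fin k) 2 ≤ Nat.choose (b ⊔ d : Fin k) 2 :=
      Nat.choose_le_choose 2 (sup_le_sup_right hab d)
    have hinf : ((a ⊓ d : Fin k) : ℕ) ≤ (b ⊓ d : Fin k) := inf_le_inf_right d hab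
    simp only [colexLabel, Sym2.sup_mk, Sym2.inf_mk]
    omega
  rw [vertexWeight_top, vertexWeight_top,
    ← add_sum_erase _ _ (mem_erase.2 ⟨hlt.ne', mem_univ b⟩),
    ← add_sum_erase _ _ (mem_erase.2 ⟨hlt.ne, mem_univ a⟩), erase_right_comm, Sym2.eq_swap]
  gcongr with d
  exact hlabel d

end Colex

section Balanced

variable {α : Type*} [Fintype α] {G : SimpleGraph α} {k r : ℕ} {e : Sym2 α → ℕ}
  {M : α → Fin k → ℕ}

/-- The number of edges of the join of `G` with `k` independent vertices. -/
noncomputable def spokeCount (G : SimpleGraph α) (k : ℕ) : ℕ :=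
  G.edgeSet.ncard + Fintype.card α * k

/-- A labeling by `1, …, spokeCount G k` of the join of `G` with `k` independent vertices: `e`
labels the edges of `G`, and the entry `M a c` of the matrix `M` labels the spoke from `a` to the
`c`-th of the `k` further vertices. -/
structure IsSpokeLabeling (G : SimpleGraph α) (e : Sym2 α → ℕ) (M : α → Fin k → ℕ) : Prop where
  mapsTo_edge : Set.MapsTo e G.edgeSet (Set.Icc 1 (spokeCount G k))
  spoke_mem : ∀ a c, M a c ∈ Set.Icc 1 (spokeCount G k)
  injOn_edge : Set.InjOn e G.edgeSet
  injective_spoke : Function.Injective (Function.uncurry M)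
  edge_ne_spoke : ∀ z ∈ G.edgeSet, ∀ a c, e z ≠ M a c

/-- The weight of the vertex `a` of `G` in a labeling of the join of `G` with `k` independent
vertices, encoded as in `IsSpokeLabeling`. -/
noncomputable def rowWeight (G : SimpleGraph α) (e : Sym2 α → ℕ) (M : α → Fin k → ℕ) (a : α) : ℕ :=
  vertexWeight G e a + ∑ c, M a c

/-- A spoke labeling whose column sums increase and are so large that, once the `k` vertices are
joined to each other by edges with larger labels, their weights exceed all weights on `G`. -/
structure IsColumnIncreasing (G : SimpleGraph α) (e : Sym2 α → ℕ) (M : α → Fin k → ℕ) : Prop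
    extends IsSpokeLabeling G e M where
  strictMono_column : StrictMono fun c => ∑ a, M a c
  lt_column : ∀ a c, vertexWeight G e a + M a c < ∑ b, M b c

/-- A labeling of the join of `G` with `k` independent vertices which becomes a local antimagic
labeling with at most `r + k` colors once the `k` vertices are joined to each other by edges with
larger labels. -/
structure IsBalanced (G : SimpleGraph α) (e : Sym2 α → ℕ) (M : α → Fin k → ℕ) (r : ℕ) : Prop
    extends IsColumnIncreasing G e M where
  rowWeight_ne : ∀ ⦃a b⦄, G.Adj a b → rowWeight G e M a ≠ rowWeight G e M b
  card_rowWeight_le : #(univ.image (rowWeight G e M)) ≤ r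

/-- The labeling of `G ∨ K_k` which extends a labeling of the join of `G` with `k` independent
vertices by labeling the edges of `K_k` last. -/
noncomputable def completedLabel (G : SimpleGraph α) (e : Sym2 α → ℕ) (M : α → Fin k → ℕ) :
    Sym2 (α ⊕ Fin k) → ℕ :=
  joinLabel e M (colexLabel (spokeCount G k))

lemma vertexWeight_completedLabel_inl (a : α) :
    vertexWeight (joinG G ⊤) (completedLabel G e M) (.inl a) = rowWeight G e M a := by
  have hinner : (fun z => completedLabel G e M (z.map .inl)) = e :=
    funext (Sym2.ind fun _ _ => rfl)
  rw [vertexWeight_joinG_inl, hinner]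
  rfl

lemma vertexWeight_completedLabel_inr (c : Fin k) :
    vertexWeight (joinG G ⊤) (completedLabel G e M) (.inr c) =
      ∑ a, M a c + vertexWeight ⊤ (colexLabel (spokeCount G k)) c := by
  have hinner : (fun z => completedLabel G e M (z.map .inr)) = colexLabel (spokeCount G k) :=
    funext (Sym2.ind fun _ _ => rfl)
  rw [vertexWeight_joinG_inr, hinner]
  rfl

lemma ncard_edgeSet_joinG_top (G : SimpleGraph α) (k : ℕ) :
    (joinG G (⊤ : SimpleGraph (Fin k))).edgeSet.ncard = spokeCount G k + k.choose 2 := by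
  rw [ncard_edgeSet_joinG, ← coe_edgeFinset (⊤ : SimpleGraph (Fin k)), Set.ncard_coe_finset,
    card_edgeFinset_top_eq_card_choose_two, Fintype.card_fin, spokeCount]

lemma IsSpokeLabeling.bijOn_completedLabel (h : IsSpokeLabeling G e M) :
    Set.BijOn (completedLabel G e M) (joinG G (⊤ : SimpleGraph (Fin k))).edgeSet
      (Set.Icc 1 (joinG G (⊤ : SimpleGraph (Fin k))).edgeSet.ncard) := by
  have hcomp : completedLabel G e M ∘ joinEdge G ⊤ =
      Sum.elim (Sum.elim (G.edgeSet.domRestrict e) (Function.uncurry M))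
        ((⊤ : SimpleGraph (Fin k)).edgeSet.domRestrict (colexLabel (spokeCount G k))) := by
    ext ((⟨⟨a, b⟩, _⟩ | _) | ⟨⟨c, d⟩, _⟩) <;> rfl
  refine bijOn_Icc_of_injOn ?_ ?_ rfl
  · rw [ncard_edgeSet_joinG_top, ← range_joinEdge, Set.mapsTo_range_iff]
    intro x
    change (completedLabel G e M ∘ joinEdge G ⊤) x ∈ _
    rw [hcomp]
    rcases x with (z | ⟨a, c⟩) | z
    · exact Set.Icc_subset_Icc_right (Nat.le_add_right _ _) (h.mapsTo_edge z.2)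
    · exact Set.Icc_subset_Icc_right (Nat.le_add_right _ _) (h.spoke_mem a c)
    · exact ⟨(lt_colexLabel _ _).pos, colexLabel_le _ z.2⟩
  · rw [← range_joinEdge]
    refine Function.Injective.injOn_range ?_
    rw [hcomp]
    refine (h.injOn_edge.injective.sumElim h.injective_spoke ?_).sumElim
      (injOn_colexLabel _).injective ?_
    · exact fun z p => h.edge_ne_spoke z z.2 p.1 p.2
    · rintro (z | ⟨a, c⟩) w
      · exact ((h.mapsTo_edge z.2).2.trans_lt (lt_colexLabel _ _)).ne
      · exact ((h.spoke_mem a c).2.trans_lt (lt_colexLabel _ _)).ne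

lemma IsColumnIncreasing.strictMono_vertexWeight_inr (h : IsColumnIncreasing G e M) :
    StrictMono fun c => vertexWeight (joinG G ⊤) (completedLabel G e M) (.inr c) := by
  simp only [vertexWeight_completedLabel_inr]
  exact h.strictMono_column.add_monotone (monotone_vertexWeight_top_colexLabel _)

lemma IsColumnIncreasing.vertexWeight_inl_lt_inr (h : IsColumnIncreasing G e M) (a : α)
    (c : Fin k) :
    vertexWeight (joinG G ⊤) (completedLabel G e M) (.inl a) <
      vertexWeight (joinG G ⊤) (completedLabel G e M) (.inr c) := by
  rw [vertexWeight_completedLabel_inl, vertexWeight_completedLabel_inr, vertexWeight_top, rowWeight,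
    ← add_sum_erase _ _ (mem_univ c), ← add_assoc]
  exact add_lt_add_of_lt_of_le (h.lt_column a c)
    (sum_le_sum fun d _ => (h.spoke_mem a d).2.trans (lt_colexLabel _ _).le)

lemma IsBalanced.isLocalAntimagic (h : IsBalanced G e M r) :
    IsLocalAntimagic (joinG G ⊤) (completedLabel G e M) := by
  refine ⟨h.bijOn_completedLabel, ?_⟩
  rintro (a | c) (b | d) hadj
  · simpa only [vertexWeight_completedLabel_inl] using h.rowWeight_ne (joinG_adj_inl_inl.1 hadj)
  · exact (h.vertexWeight_inl_lt_inr a d).ne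
  · exact (h.vertexWeight_inl_lt_inr b c).ne'
  · exact h.strictMono_vertexWeight_inr.injective.ne (joinG_adj_inr_inr.1 hadj)

lemma IsBalanced.colorCount_le (h : IsBalanced G e M r) :
    colorCount (joinG G ⊤) (completedLabel G e M) ≤ r + k := by
  set w := vertexWeight (joinG G ⊤) (completedLabel G e M)
  have hsub : univ.image w ⊆
      univ.image (rowWeight G e M) ∪ univ.image fun c => w (.inr c) := by
    rintro _ hx
    obtain ⟨a | c, -, rfl⟩ := mem_image.1 hx
    · refine mem_union_left _ (mem_image.2 ⟨a, mem_univ a, ?_⟩)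
      exact (vertexWeight_completedLabel_inl a).symm
    · exact mem_union_right _ (mem_image_of_mem _ (mem_univ c))
  calc #(univ.image w) ≤ #(univ.image (rowWeight G e M)) + #(univ.image fun c => w (.inr c)) :=
        (card_le_card hsub).trans (card_union_le _ _)
    _ ≤ r + #(univ : Finset (Fin k)) := add_le_add h.card_rowWeight_le card_image_le
    _ = r + k := by rw [card_fin]

end Balanced

section AddColumn

variable {α : Type*} {G : SimpleGraph α} {k r : ℕ} {e : Sym2 α → ℕ} {M : α → Fin k → ℕ}
  {x y : α → ℕ}

/-- The matrix `M` with the further column `x`. -/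
def addColumn (M : α → Fin k → ℕ) (x : α → ℕ) : α → Fin (k + 1) → ℕ :=
  fun a => Fin.snoc (M a) (x a)

@[simp]
lemma addColumn_castSucc (M : α → Fin k → ℕ) (x : α → ℕ) (a : α) (c : Fin k) :
    addColumn M x a c.castSucc = M a c :=
  Fin.snoc_castSucc (α := fun _ => ℕ) _ _ _

@[simp]
lemma addColumn_last (M : α → Fin k → ℕ) (x : α → ℕ) (a : α) :
    addColumn M x a (Fin.last k) = x a :=
  Fin.snoc_last (α := fun _ => ℕ) _ _

variable [Fintype α]

lemma rowWeight_addColumn (a : α) :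
    rowWeight G e (addColumn M x) a = rowWeight G e M a + x a := by
  simp only [rowWeight, Fin.sum_univ_castSucc, addColumn_castSucc, addColumn_last, add_assoc]

lemma spokeCount_succ (G : SimpleGraph α) (k : ℕ) :
    spokeCount G (k + 1) = spokeCount G k + Fintype.card α := by
  simp only [spokeCount]
  ring

lemma IsSpokeLabeling.addColumn (h : IsSpokeLabeling G e M) (hinj : Function.Injective x)
    (hx : ∀ a, x a ∈ Set.Ioc (spokeCount G k) (spokeCount G (k + 1))) :
    IsSpokeLabeling G e (addColumn M x) := by
  have hmono : Set.Icc 1 (spokeCount G k) ⊆ Set.Icc 1 (spokeCount G (k + 1)) :=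
    Set.Icc_subset_Icc_right (spokeCount_succ G k ▸ Nat.le_add_right _ _)
  have hne : ∀ a b c, M a c ≠ x b := fun a b c => ((h.spoke_mem a c).2.trans_lt (hx b).1).ne
  refine ⟨h.mapsTo_edge.mono_right hmono, fun a c => ?_, h.injOn_edge, ?_, fun z hz a c => ?_⟩
  · cases c using Fin.lastCases with
    | last => simpa using ⟨(hx a).1.pos, (hx a).2⟩
    | cast c => simpa using hmono (h.spoke_mem a c)
  · rintro ⟨a, c⟩ ⟨b, d⟩ heq
    cases c using Fin.lastCases with
    | last =>
      cases d using Fin.lastCases with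
      | last => simpa [hinj.eq_iff] using heq
      | cast d => simp [(hne b a d).symm] at heq
    | cast c =>
      cases d using Fin.lastCases with
      | last => simp [hne a b c] at heq
      | cast d =>
        have hpair : (a, c) = (b, d) := h.injective_spoke (by simpa using heq)
        simpa using hpair
  · cases c using Fin.lastCases with
    | last => simpa using ((h.mapsTo_edge hz).2.trans_lt (hx a).1).ne
    | cast c => simpa using h.edge_ne_spoke z hz a c

lemma IsColumnIncreasing.addColumn [Nonempty α] [NeZero k] (h : IsColumnIncreasing G e M)
    (hinj : Function.Injective x)
    (hx : ∀ a, x a ∈ Set.Ioc (spokeCount G k) (spokeCount G (k + 1))) :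
    IsColumnIncreasing G e (addColumn M x) := by
  have hlt : ∀ a c, M a c < x a := fun a c => (h.spoke_mem a c).2.trans_lt (hx a).1
  refine ⟨h.toIsSpokeLabeling.addColumn hinj hx, fun c d hcd => ?_, fun a c => ?_⟩
  · cases c using Fin.lastCases with
    | last => exact absurd hcd (Fin.le_last d).not_gt
    | cast c =>
      cases d using Fin.lastCases with
      | last => simpa using sum_lt_sum_of_nonempty univ_nonempty fun a _ => hlt a c
      | cast d => simpa using h.strictMono_column (Fin.castSucc_lt_castSucc_iff.1 hcd)
  · cases c using Fin.lastCases with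
    | last =>
      have hsplit : ∀ y : α → ℕ, y a + ∑ b ∈ univ.erase a, y b = ∑ b, y b :=
        fun y => add_sum_erase _ _ (mem_univ a)
      have hrest : ∑ b ∈ univ.erase a, M b 0 ≤ ∑ b ∈ univ.erase a, x b :=
        sum_le_sum fun b _ => (hlt b 0).le
      have hold := h.lt_column a 0
      rw [← hsplit] at hold
      simp only [addColumn_last, ← hsplit x]
      omega
    | cast c => simpa using h.lt_column a c

lemma IsBalanced.addColumn_addColumn [Nonempty α] [NeZero k] (h : IsBalanced G e M r)
    (hinjx : Function.Injective x)
    (hx : ∀ a, x a ∈ Set.Ioc (spokeCount G k) (spokeCount G (k + 1)))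
    (hinjy : Function.Injective y)
    (hy : ∀ a, y a ∈ Set.Ioc (spokeCount G (k + 1)) (spokeCount G (k + 2)))
    {t : ℕ} (hxy : ∀ a, x a + y a = t) :
    IsBalanced G e (addColumn (addColumn M x) y) r := by
  have hrow : rowWeight G e (addColumn (addColumn M x) y) = (· + t) ∘ rowWeight G e M := by
    funext a
    simp only [rowWeight_addColumn, Function.comp_apply, add_assoc, hxy]
  refine ⟨(h.toIsColumnIncreasing.addColumn hinjx hx).addColumn hinjy hy, fun a b hab => ?_, ?_⟩
  · simpa only [hrow, Function.comp_apply, ne_eq, Nat.add_right_cancel_iff] using h.rowWeight_ne hab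
  · rw [hrow, ← image_image]
    exact card_image_le.trans h.card_rowWeight_le

lemma IsBalanced.exists_add_two [Nonempty α] [NeZero k] (h : IsBalanced G e M r) :
    ∃ M' : α → Fin (k + 2) → ℕ, IsBalanced G e M' r := by
  let σ := Fintype.equivFin α
  have hσ : ∀ a, (σ a : ℕ) < Fintype.card α := fun a => (σ a).isLt
  have hinj : ∀ a b, (σ a : ℕ) = σ b → a = b := fun a b hab => σ.injective (Fin.ext hab)
  refine ⟨_, h.addColumn_addColumn (x := fun a => spokeCount G k + 1 + σ a)
    (y := fun a => spokeCount G (k + 2) - σ a) (t := spokeCount G k + 1 + spokeCount G (k + 2))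
    (fun a b hab => hinj a b (by simpa using hab)) (fun a => ?_) (fun a b hab => hinj a b ?_)
    (fun a => ?_) (fun a => ?_)⟩
  · have := hσ a
    simp only [spokeCount_succ, Set.mem_Ioc]
    omega
  · have := hσ a
    have := hσ b
    simp only [spokeCount_succ] at hab
    omega
  · have := hσ a
    simp only [spokeCount_succ, Set.mem_Ioc]
    omega
  · have := hσ a
    simp only [spokeCount_succ]
    omega

lemma IsBalanced.exists_add_two_mul [Nonempty α] [NeZero k] (h : IsBalanced G e M r) {l t : ℕ}
    (hl : l = k + 2 * t) : ∃ M' : α → Fin l → ℕ, IsBalanced G e M' r := by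
  induction t generalizing l with
  | zero =>
    subst hl
    exact ⟨M, h⟩
  | succ t ih =>
    subst hl
    obtain ⟨M', h'⟩ := ih rfl
    have : NeZero (k + 2 * t) := ⟨by have := NeZero.ne k; omega⟩
    exact h'.exists_add_two

lemma IsBalanced.chiLA_joinG_top (h : IsBalanced G e M r) {s : Finset α} (hs : G.IsClique s)
    (hcard : #s = r) : chiLA (joinG G (⊤ : SimpleGraph (Fin k))) = r + k := by
  refine chiLA_eq h.isLocalAntimagic h.colorCount_le fun g hg => ?_
  have hclique : (joinG G (⊤ : SimpleGraph (Fin k))).IsClique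
      (s.disjSum univ : Finset (α ⊕ Fin k)) :=
    isClique_joinG_disjSum hs fun _ _ _ _ => id
  simpa [hcard] using hclique.card_le_of_colorable hg.colorable

end AddColumn

section Coloring

variable {α κ : Type*} [Fintype α] [Fintype κ] {G : SimpleGraph α} {k : ℕ} {e : Sym2 α → ℕ}

lemma IsColumnIncreasing.isBalanced {M : α → Fin k → ℕ} (h : IsColumnIncreasing G e M)
    (C : G.Coloring κ) {w : κ → ℕ} (hw : Function.Injective w)
    (hrow : ∀ a, rowWeight G e M a = w (C a)) : IsBalanced G e M (Fintype.card κ) := by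
  refine ⟨h, fun a b hab => ?_, ?_⟩
  · rw [hrow, hrow]
    exact hw.ne (C.valid hab)
  · rw [show rowWeight G e M = w ∘ C from funext hrow, ← image_image]
    exact card_image_le.trans (card_le_univ _)

lemma IsSpokeLabeling.isColumnIncreasing {M : α → Fin 1 → ℕ} (h : IsSpokeLabeling G e M)
    (hlt : ∀ a, rowWeight G e M a < ∑ b, M b 0) : IsColumnIncreasing G e M where
  toIsSpokeLabeling := h
  strictMono_column := Subsingleton.strictMono _
  lt_column a c := by
    rw [Subsingleton.elim c 0]
    simpa only [rowWeight, univ_unique, Fin.default_eq_zero, sum_singleton] using hlt a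

end Coloring

section Path

variable {N k : ℕ} {p : ℕ → ℕ}

/-- The labeling of the edges of a path in which the `i`-th edge, joining the vertices `i` and
`i + 1`, has the label `p i`. -/
def pathLabel (p : ℕ → ℕ) (z : Sym2 (Fin N)) : ℕ := p z.inf

/-- The weight of the vertex `i` of `P_N` in the labeling `pathLabel p`. -/
def pathWeight (N : ℕ) (p : ℕ → ℕ) (i : ℕ) : ℕ :=
  (if i = 0 then 0 else p (i - 1)) + if i + 1 < N then p i else 0

lemma vertexWeight_pathLabel (p : ℕ → ℕ) (i : Fin N) :
    vertexWeight (pathGraph N) (pathLabel p) i = pathWeight N p i := by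
  have hterm : ∀ j : Fin N, (if (pathGraph N).Adj i j then pathLabel p s(i, j) else 0) =
      (if (j : ℕ) = i - 1 then if (i : ℕ) = 0 then 0 else p (i - 1) else 0) +
        if (j : ℕ) = i + 1 then p i else 0 := by
    intro j
    simp only [pathGraph_adj, pathLabel, Sym2.inf_mk]
    by_cases hnext : (j : ℕ) = i + 1
    · rw [min_eq_left (Fin.le_def.2 (by omega)), if_pos (.inl hnext.symm), if_neg (by omega),
        if_pos hnext, zero_add]
    · by_cases hprev : (j : ℕ) + 1 = i
      · rw [min_eq_right (Fin.le_def.2 (by omega)), if_pos (.inr hprev), if_pos (by omega),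
          if_neg (by omega), if_neg hnext, add_zero, Nat.eq_sub_of_add_eq hprev]
      · split_ifs <;> omega
  rw [vertexWeight_eq_sum, sum_filter, sum_congr rfl fun j _ => hterm j, sum_add_distrib,
    Fin.sum_univ_eq_sum_range fun j =>
      if j = i - 1 then if (i : ℕ) = 0 then 0 else p (i - 1) else 0,
    Fin.sum_univ_eq_sum_range fun j => if j = i + 1 then p i else 0, sum_ite_eq', sum_ite_eq',
    if_pos (mem_range.2 (by omega))]
  simp only [mem_range, pathWeight]

lemma bijOn_inf_edgeSet_pathGraph (N : ℕ) :
    Set.BijOn (fun z : Sym2 (Fin N) => (z.inf : ℕ)) (pathGraph N).edgeSet (Set.Iio (N - 1)) := by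
  have hsup : ∀ z ∈ (pathGraph N).edgeSet, (z.sup : ℕ) = z.inf + 1 := by
    rintro ⟨i, j⟩ h
    change ((max i j : Fin N) : ℕ) = (min i j : Fin N) + 1
    rcases pathGraph_adj.1 h with (h : (i : ℕ) + 1 = j) | (h : (j : ℕ) + 1 = i)
    · rw [max_eq_right (Fin.le_def.2 (by omega)), min_eq_left (Fin.le_def.2 (by omega)), h]
    · rw [max_eq_left (Fin.le_def.2 (by omega)), min_eq_right (Fin.le_def.2 (by omega)), h]
  refine ⟨fun z hz => ?_, fun z hz w hw (h : (z.inf : ℕ) = w.inf) => ?_,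
    fun i hi => ?_⟩
  · have := hsup z hz
    have := z.sup.isLt
    simp only [Set.mem_Iio]
    omega
  · refine Sym2.inf_eq_inf_and_sup_eq_sup.1 ⟨Fin.ext h, Fin.ext ?_⟩
    rw [hsup z hz, hsup w hw, h]
  · rw [Set.mem_Iio] at hi
    refine ⟨s(⟨i, by omega⟩, ⟨i + 1, by omega⟩), pathGraph_adj.2 (.inl rfl), ?_⟩
    simp

lemma spokeCount_pathGraph (N k : ℕ) : spokeCount (pathGraph N) k = N - 1 + N * k := by
  have hedges : (pathGraph N).edgeSet.ncard = N - 1 := by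
    rw [← (bijOn_inf_edgeSet_pathGraph N).injOn.ncard_image,
      (bijOn_inf_edgeSet_pathGraph N).image_eq, ← coe_Iio, Set.ncard_coe_finset, Nat.card_Iio]
  rw [spokeCount, hedges, Fintype.card_fin]

lemma isSpokeLabeling_pathLabel {M : Fin N → Fin k → ℕ}
    (hp : Set.MapsTo p (Set.Iio (N - 1)) (Set.Icc 1 (N - 1 + N * k)))
    (hM : ∀ a c, M a c ∈ Set.Icc 1 (N - 1 + N * k)) (hpinj : Set.InjOn p (Set.Iio (N - 1)))
    (hMinj : Function.Injective (Function.uncurry M))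
    (hne : ∀ i < N - 1, ∀ a c, p i ≠ M a c) : IsSpokeLabeling (pathGraph N) (pathLabel p) M := by
  have hinf := bijOn_inf_edgeSet_pathGraph N
  rw [← spokeCount_pathGraph] at hp hM
  exact ⟨hp.comp hinf.mapsTo, hM, hpinj.comp hinf.injOn hinf.mapsTo, hMinj,
    fun z hz => hne _ (hinf.mapsTo hz)⟩

lemma IsColumnIncreasing.isBalanced_two {M : Fin N → Fin k → ℕ}
    (h : IsColumnIncreasing (pathGraph N) (pathLabel p) M) {A B : ℕ} (hAB : A ≠ B)
    (hrow : ∀ i : Fin N, pathWeight N p i + ∑ c, M i c = if (i : ℕ) % 2 = 0 then A else B) :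
    IsBalanced (pathGraph N) (pathLabel p) M 2 := by
  refine h.isBalanced (pathGraph.bicoloring N) (w := fun b => if b then A else B) ?_ fun i => ?_
  · rintro (_ | _) (_ | _) <;> simp [hAB, hAB.symm]
  · rw [rowWeight, vertexWeight_pathLabel, hrow]
    simp only [show pathGraph.bicoloring N i = decide ((i : ℕ) % 2 = 0) from rfl, decide_eq_true_eq]

lemma isBalanced_fan {s : ℕ → ℕ} {A B a b : ℕ}
    (hp : Set.MapsTo p (Set.Iio (N - 1)) (Set.Icc 1 (2 * N - 1)))
    (hs : Set.MapsTo s (Set.Iio N) (Set.Icc 1 (2 * N - 1)))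
    (hpinj : Set.InjOn p (Set.Iio (N - 1))) (hsinj : Set.InjOn s (Set.Iio N))
    (hne : ∀ i < N - 1, ∀ j < N, p i ≠ s j)
    (hrow : ∀ i < N, pathWeight N p i + s i = if i % 2 = 0 then A else B) (hAB : A ≠ B)
    (hab : a ≠ b) (ha : a < N) (hb : b < N) (hA : A < s a + s b) (hB : B < s a + s b) :
    IsBalanced (pathGraph N) (pathLabel p) (fun i (_ : Fin 1) => s i) 2 := by
  have hcount : N - 1 + N * 1 = 2 * N - 1 := by omega
  have hspoke : IsSpokeLabeling (pathGraph N) (pathLabel p) fun i (_ : Fin 1) => s i := by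
    refine isSpokeLabeling_pathLabel (hcount ▸ hp) (fun i _ => hcount ▸ hs i.isLt) hpinj ?_
      fun i hi j _ => hne i hi j j.isLt
    rintro ⟨i, c⟩ ⟨j, d⟩ h
    exact Prod.ext (Fin.ext (hsinj i.isLt j.isLt h)) (Subsingleton.elim c d)
  have hsum : s a + s b ≤ ∑ i : Fin N, s i :=
    add_le_sum (i := ⟨a, ha⟩) (j := ⟨b, hb⟩) (f := fun i : Fin N => s i) (fun _ _ => Nat.zero_le _)
      (mem_univ _) (mem_univ _) (by simpa using hab)
  refine (hspoke.isColumnIncreasing fun i => ?_).isBalanced_two hAB fun i => ?_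
  · rw [rowWeight, vertexWeight_pathLabel, Fin.sum_univ_one, hrow i i.isLt]
    split_ifs <;> omega
  · rw [Fin.sum_univ_one, hrow i i.isLt]

end Path

section Fan

/-- The label of the edge from `i` to `i + 1` in the labeling of the fan `P_{4t+2} ∨ K_1`. The odd
`i` carry `1, …, 2t` in increasing order; `i ≡ 2` and `i ≡ 0` modulo `4` carry the next two blocks
of consecutive labels, in decreasing order. -/
def oddFanEdge (t i : ℕ) : ℕ :=
  if i % 2 = 1 then (i + 1) / 2 else if i % 4 = 0 then 4 * t + 1 - i / 4 else 3 * t - i / 4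

/-- The label of the spoke at `i` in the labeling of the fan `P_{4t+2} ∨ K_1`. The residues
`0, 2, 1, 3` of `i` modulo `4` carry, in this order, successive blocks of consecutive labels, each
in decreasing order, and the last spoke carries the largest label. -/
def oddFanSpoke (t i : ℕ) : ℕ :=
  if i = 4 * t + 1 then 8 * t + 3 else if i % 4 = 0 then 5 * t + 2 - i / 4
  else if i % 4 = 1 then 7 * t + 2 - i / 4 else if i % 4 = 2 then 6 * t + 2 - i / 4
  else 8 * t + 2 - i / 4

/-- The label of the edge from `i` to `i + 1` in the labeling of the fan `P_{4t} ∨ K_1`. Together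
with those of `evenFanSpoke`, the labels of the residues of `i` modulo `4` fill consecutive
blocks. -/
def evenFanEdge (t i : ℕ) : ℕ :=
  if i % 2 = 1 then (i + 1) / 2 else if i % 4 = 0 then 3 * t - 1 - i / 4 else 6 * t - 1 - i / 4

/-- The label of the spoke at `i` in the labeling of the fan `P_{4t} ∨ K_1`. -/
def evenFanSpoke (t i : ℕ) : ℕ :=
  if i = 4 * t - 1 then 5 * t - 1 else if i % 4 = 0 then 8 * t - 1 - i / 4
  else if i % 4 = 1 then 7 * t - 1 - i / 4 else if i % 4 = 2 then 5 * t - 2 - i / 4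
  else 4 * t - 2 - i / 4

variable {t i : ℕ}

lemma oddFanEdge_mem (hi : i < 4 * t + 1) : oddFanEdge t i ∈ Set.Ico 1 (4 * t + 2) := by
  grind [oddFanEdge]

lemma oddFanSpoke_mem (hi : i < 4 * t + 2) :
    oddFanSpoke t i ∈ Set.Ico (4 * t + 2) (8 * t + 4) := by
  grind [oddFanSpoke]

lemma injOn_oddFanEdge (t : ℕ) : Set.InjOn (oddFanEdge t) (Set.Iio (4 * t + 1)) := by
  grind [oddFanEdge, Set.InjOn]

lemma injOn_oddFanSpoke (t : ℕ) : Set.InjOn (oddFanSpoke t) (Set.Iio (4 * t + 2)) := by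
  grind [oddFanSpoke, Set.InjOn]

lemma pathWeight_add_oddFanSpoke (hi : i < 4 * t + 2) :
    pathWeight (4 * t + 2) (oddFanEdge t) i + oddFanSpoke t i =
      if i % 2 = 0 then 9 * t + 3 else 11 * t + 4 := by
  grind [pathWeight, oddFanEdge, oddFanSpoke]

lemma isBalanced_oddFan (t : ℕ) : IsBalanced (pathGraph (4 * t + 2)) (pathLabel (oddFanEdge t))
    (fun i (_ : Fin 1) => oddFanSpoke t i) 2 := by
  have hsum : oddFanSpoke t (4 * t) + oddFanSpoke t (4 * t + 1) = 12 * t + 5 := by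
    grind [oddFanSpoke]
  refine isBalanced_fan (fun i hi => ?_) (fun i hi => ?_) (injOn_oddFanEdge t)
    (injOn_oddFanSpoke t) (fun i hi j hj => ?_) (fun i => pathWeight_add_oddFanSpoke) (by omega)
    (a := 4 * t) (b := 4 * t + 1) (by omega) (by omega) (by omega) (by omega) (by omega)
  · have := oddFanEdge_mem hi
    grind
  · have := oddFanSpoke_mem hi
    grind
  · exact ((oddFanEdge_mem hi).2.trans_le (oddFanSpoke_mem hj).1).ne

lemma evenFanEdge_mem (hi : i < 4 * t - 1) :
    evenFanEdge t i ∈ Set.Ico 1 (3 * t) ∪ Set.Ico (5 * t) (6 * t) := by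
  grind [evenFanEdge]

lemma evenFanSpoke_mem (hi : i < 4 * t) :
    evenFanSpoke t i ∈ Set.Ico (3 * t) (5 * t) ∪ Set.Ico (6 * t) (8 * t) := by
  grind [evenFanSpoke]

lemma injOn_evenFanEdge (t : ℕ) : Set.InjOn (evenFanEdge t) (Set.Iio (4 * t - 1)) := by
  grind [evenFanEdge, Set.InjOn]

lemma injOn_evenFanSpoke (t : ℕ) : Set.InjOn (evenFanSpoke t) (Set.Iio (4 * t)) := by
  grind [evenFanSpoke, Set.InjOn]

lemma pathWeight_add_evenFanSpoke (hi : i < 4 * t) :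
    pathWeight (4 * t) (evenFanEdge t) i + evenFanSpoke t i =
      if i % 2 = 0 then 11 * t - 2 else 10 * t - 1 := by
  grind [pathWeight, evenFanEdge, evenFanSpoke]

lemma isBalanced_evenFan (ht : 2 ≤ t) : IsBalanced (pathGraph (4 * t)) (pathLabel (evenFanEdge t))
    (fun i (_ : Fin 1) => evenFanSpoke t i) 2 := by
  have hsum : evenFanSpoke t 0 + evenFanSpoke t 1 = 15 * t - 2 := by
    grind [evenFanSpoke]
  refine isBalanced_fan (fun i hi => ?_) (fun i hi => ?_) (injOn_evenFanEdge t)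
    (injOn_evenFanSpoke t) (fun i hi j hj => ?_) (fun i => pathWeight_add_evenFanSpoke) (by omega)
    (a := 0) (b := 1) (by omega) (by omega) (by omega) (by omega) (by omega)
  · have := evenFanEdge_mem hi
    grind
  · have := evenFanSpoke_mem hi
    grind
  · have := evenFanEdge_mem hi
    have := evenFanSpoke_mem hj
    grind

end Fan

section SmallPaths

lemma isSpokeLabeling_pathLabel_succ {N k : ℕ} {M : Fin N → Fin k → ℕ}
    (hM : ∀ a c, M a c ∈ Set.Icc N (N - 1 + N * k))
    (hMinj : Function.Injective (Function.uncurry M)) :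
    IsSpokeLabeling (pathGraph N) (pathLabel Nat.succ) M := by
  refine isSpokeLabeling_pathLabel (fun i hi => ?_) (fun a c => ?_) Nat.succ_injective.injOn hMinj
    fun i hi a c => ?_
  · simp only [Set.mem_Iio] at hi
    simp only [Set.mem_Icc]
    omega
  · have := (hM a c).1
    have := a.pos
    exact ⟨by omega, (hM a c).2⟩
  · have := (hM a c).1
    omega

lemma isBalanced_path_four_join_three : IsBalanced (pathGraph 4) (pathLabel Nat.succ)
    ![![11, 13, 6], ![7, 12, 10], ![8, 4, 14], ![5, 9, 15]] 2 := by
  refine IsColumnIncreasing.isBalanced_two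
    ⟨isSpokeLabeling_pathLabel_succ (by decide) (by decide), by decide, ?_⟩
    (A := 31) (B := 32) (by decide) (by decide)
  simp only [vertexWeight_pathLabel]
  decide

lemma isBalanced_path_four_join_one :
    IsBalanced (pathGraph 4) (pathLabel Nat.succ) ![![6], ![5], ![7], ![4]] 3 := by
  have hrow : ∀ a, rowWeight (pathGraph 4) (pathLabel Nat.succ) ![![6], ![5], ![7], ![4]] a =
      ![7, 8, 12, 7] a := by
    simp only [rowWeight, vertexWeight_pathLabel]
    decide
  refine ⟨IsSpokeLabeling.isColumnIncreasing
    (isSpokeLabeling_pathLabel_succ (by decide) (by decide)) ?_, ?_, ?_⟩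
  · simp only [hrow]
    decide
  · intro a b hab
    rw [pathGraph_adj] at hab
    rw [hrow, hrow]
    revert a b
    decide
  · rw [funext hrow]
    decide

-- `eᵢ` and `sᵢ` are the labels of the path edges and of the spokes of `P_4 ∨ K_1`. The quantifiers
-- are ordered so that each equation between weights prunes the search as early as possible.
lemma fan_four_weight_eq :
    ∀ e₀ ∈ Icc 1 7, ∀ s₀ ∈ Icc 1 7, ∀ e₁ ∈ Icc 1 7, ∀ e₂ ∈ Icc 1 7, ∀ s₂ ∈ Icc 1 7,
      e₀ + s₀ = e₁ + e₂ + s₂ → ∀ s₁ ∈ Icc 1 7, ∀ s₃ ∈ Icc 1 7, e₀ + e₁ + s₁ = e₂ + s₃ →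
        [e₀, e₁, e₂, s₀, s₁, s₂, s₃].Nodup → e₀ + s₀ = e₂ + s₃ := by
  decide +kernel

lemma vertexWeight_path_four_join_one (f : Sym2 (Fin 4 ⊕ Fin 1) → ℕ) (i : Fin 4) :
    vertexWeight (joinG (pathGraph 4) ⊤) f (.inl i) =
      ![f s(.inl 0, .inl 1), f s(.inl 0, .inl 1) + f s(.inl 1, .inl 2),
        f s(.inl 1, .inl 2) + f s(.inl 2, .inl 3), f s(.inl 2, .inl 3)] i +
      f s(.inl i, .inr 0) := by
  have hswap : ∀ a b : Fin 4, f s(.inl a, .inl b) = f s(.inl b, .inl a) :=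
    fun a b => congrArg f Sym2.eq_swap
  fin_cases i <;> simp [vertexWeight_eq_sum, sum_filter, Fin.sum_univ_four,
    pathGraph_adj, hswap 1 0, hswap 2 1, hswap 3 2]

lemma four_le_colorCount_path_four_join_one {f : Sym2 (Fin 4 ⊕ Fin 1) → ℕ}
    (hf : IsLocalAntimagic (joinG (pathGraph 4) ⊤) f) :
    4 ≤ colorCount (joinG (pathGraph 4) ⊤) f := by
  by_contra! hcolors
  have hcolors := Nat.le_of_lt_succ hcolors
  have hadj : ∀ a b : Fin 4, a.val + 1 = b →
      (joinG (pathGraph 4) (⊤ : SimpleGraph (Fin 1))).Adj (.inl a) (.inl b) :=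
    fun a b h => joinG_adj_inl_inl.2 (pathGraph_adj.2 (.inl h))
  set w := vertexWeight (joinG (pathGraph 4) (⊤ : SimpleGraph (Fin 1))) f with hw
  have h02 : w (.inl 0) = w (.inl 2) :=
    hf.vertexWeight_eq_of_diamond hcolors (joinG_adj_inl_inr 1 0) (hadj 0 1 rfl)
      (joinG_adj_inl_inr 0 0) (hadj 1 2 rfl).symm (joinG_adj_inl_inr 2 0)
  have h13 : w (.inl 1) = w (.inl 3) :=
    hf.vertexWeight_eq_of_diamond hcolors (joinG_adj_inl_inr 2 0) (hadj 1 2 rfl)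
      (joinG_adj_inl_inr 1 0) (hadj 2 3 rfl).symm (joinG_adj_inl_inr 3 0)
  have h03 : w (.inl 0) ≠ w (.inl 3) := h13 ▸ hf.2 (hadj 0 1 rfl)
  simp only [hw, vertexWeight_path_four_join_one] at h02 h13 h03
  let edges : List (Sym2 (Fin 4 ⊕ Fin 1)) :=
    [s(.inl 0, .inl 1), s(.inl 1, .inl 2), s(.inl 2, .inl 3), s(.inl 0, .inr 0), s(.inl 1, .inr 0),
      s(.inl 2, .inr 0), s(.inl 3, .inr 0)]
  have hedges : ∀ z ∈ edges, z ∈ (joinG (pathGraph 4) (⊤ : SimpleGraph (Fin 1))).edgeSet := by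
    simp [edges, pathGraph_adj]
  have hnodup : (edges.map f).Nodup :=
    List.Nodup.map_on (fun y hy z hz h => hf.1.injOn (hedges y hy) (hedges z hz) h) (by decide)
  have hmem : ∀ z ∈ edges, f z ∈ Icc 1 7 := fun z hz => by
    simpa [ncard_edgeSet_joinG_top, spokeCount_pathGraph] using hf.1.mapsTo (hedges z hz)
  simp only [edges, List.forall_mem_cons] at hmem
  obtain ⟨he₀, he₁, he₂, hs₀, hs₁, hs₂, hs₃, -⟩ := hmem
  exact h03 (fan_four_weight_eq _ he₀ _ hs₀ _ he₁ _ he₂ _ hs₂ h02 _ hs₁ _ hs₃ h13 hnodup)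

lemma chiLA_path_four_join_one : chiLA (joinG (pathGraph 4) (⊤ : SimpleGraph (Fin 1))) = 4 :=
  chiLA_eq isBalanced_path_four_join_one.isLocalAntimagic
    isBalanced_path_four_join_one.colorCount_le fun _ => four_le_colorCount_path_four_join_one

end SmallPaths

lemma exists_isBalanced_fan {m : ℕ} (hm : 1 ≤ m) (hm2 : m ≠ 2) :
    ∃ e, ∃ M : Fin (2 * m) → Fin 1 → ℕ, IsBalanced (pathGraph (2 * m)) e M 2 := by
  obtain ⟨t, rfl | rfl⟩ := m.even_or_odd'
  · rw [show 2 * (2 * t) = 4 * t by ring]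
    exact ⟨_, _, isBalanced_evenFan (by omega)⟩
  · rw [show 2 * (2 * t + 1) = 4 * t + 2 by ring]
    exact ⟨_, _, isBalanced_oddFan t⟩

lemma exists_isBalanced_pathGraph {m n : ℕ} (hm : 1 ≤ m) (hn : 1 ≤ n) (hmn : ¬(m = 2 ∧ n = 1)) :
    ∃ e, ∃ M : Fin (2 * m) → Fin (2 * n - 1) → ℕ, IsBalanced (pathGraph (2 * m)) e M 2 := by
  by_cases hm2 : m = 2
  · subst hm2
    exact ⟨_, isBalanced_path_four_join_three.exists_add_two_mul (t := n - 2) (by omega)⟩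
  · have : Nonempty (Fin (2 * m)) := ⟨⟨0, by omega⟩⟩
    obtain ⟨e, M, hM⟩ := exists_isBalanced_fan hm hm2
    exact ⟨e, hM.exists_add_two_mul (t := n - 1) (by omega)⟩

/-- Theorem: For all integers `m, n ≥ 1` with `(m,n) ≠ (2,1)`,
`χ_la(P_{2m} ∨ K_{2n−1}) = 2n + 1`; in the exceptional case, `χ_la(P_4 ∨ K_1) = 4`. -/
theorem chiLA_path_join_completeOdd (m n : ℕ) (hm : 1 ≤ m) (hn : 1 ≤ n) :
    (¬(m = 2 ∧ n = 1) →
      chiLA (joinG (pathGraph (2 * m)) (⊤ : SimpleGraph (Fin (2 * n - 1)))) = 2 * n + 1) ∧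
    chiLA (joinG (pathGraph 4) (⊤ : SimpleGraph (Fin 1))) = 4 := by
  refine ⟨fun hmn => ?_, chiLA_path_four_join_one⟩
  obtain ⟨e, M, hM⟩ := exists_isBalanced_pathGraph hm hn hmn
  have hadj : (pathGraph (2 * m)).Adj ⟨0, by omega⟩ ⟨1, by omega⟩ := pathGraph_adj.2 (.inl rfl)
  have hclique : (pathGraph (2 * m)).IsClique
      ({⟨0, by omega⟩, ⟨1, by omega⟩} : Finset (Fin (2 * m))) := by
    rw [coe_pair, isClique_pair]
    exact fun _ => hadj
  rw [hM.chiLA_joinG_top hclique (card_pair hadj.ne)]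
  omega
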